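/- (Instance equivalence: from persuasion strategy to predictor.) Fix ε ≥ 0 and t ≥ 1, and let (π, b) be a sender strategy on signal set A in the associated persuasion instance such that: for every a with m(a) = Σ_i λ_i·π_i(a) > 0, the biased posterior mean p(a) = (b(a) + Σ_i λ_i·π_i(a)·θ_i)/m(a) lies in [0,1]; the values p(a) for a with m(a) > 0 are pairwise distinct; the agent's best-response at prediction p(a) in the calibration model is a, i.e., a*(p(a)) = a; and the bounded-rationality constraint (Σ_{a: m(a)>0} m(a)·|b(a)/m(a)|^t)^{1/t} ≤ ε holds. Define the predictor f by f_i(p) = Σ_{a∈A} π_i(a)·1{p(a) = p}. Then f is a finitely supported (ε,ℓ_t)-calibrated predictor and V(f) = Σ_i λ_i·Σ_a π_i(a)·u(a,θ_i), the sender's payoff when the receiver follows each recommendation. -/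

import Mathlib

open Finset

noncomputable section

namespace PersuasiveCalibration

/-- The environment of the persuasive calibration problem: `n` events with
probabilities `lam i > 0` summing to one and sorted expected outcomes `theta i ∈ [0,1]`. -/
structure Setup (n : ℕ) : Type where
  lam : Fin n → ℝ
  theta : Fin n → ℝ
  lam_pos : ∀ i, 0 < lam i
  lam_sum : ∑ i, lam i = 1
  theta_mono : Monotone theta
  theta_mem : ∀ i, theta i ∈ Set.Icc (0 : ℝ) 1

variable {n : ℕ}

/-- A finitely supported probability distribution on `[0,1]`. -/
def IsDist (μ : ℝ →₀ ℝ) : Prop :=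
  (∀ p, 0 ≤ μ p) ∧ (∀ p ∈ μ.support, p ∈ Set.Icc (0 : ℝ) 1) ∧ (∑ p ∈ μ.support, μ p) = 1

/-- A predictor assigns to each event a finitely supported probability distribution on `[0,1]`. -/
def IsPredictor (f : Fin n → ℝ →₀ ℝ) : Prop := ∀ i, IsDist (f i)

/-- The (unconditional) prediction space of a predictor. -/
def suppF (f : Fin n → ℝ →₀ ℝ) : Finset ℝ := Finset.univ.biUnion fun i => (f i).support

/-- The marginalized predictor `f(p) = ∑ i, λ i * f i p`. -/
def marginal (S : Setup n) (f : Fin n → ℝ →₀ ℝ) (p : ℝ) : ℝ := ∑ i, S.lam i * f i p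

/-- The true expected outcome conditional on the prediction `p`. -/
def kappa (S : Setup n) (f : Fin n → ℝ →₀ ℝ) (p : ℝ) : ℝ :=
  (∑ i, S.lam i * f i p * S.theta i) / marginal S f p

/-- The `ℓ_t`-norm expected calibration error of a predictor. -/
def ECE (S : Setup n) (t : ℝ) (f : Fin n → ℝ →₀ ℝ) : ℝ :=
  (∑ p ∈ suppF f, marginal S f p * |kappa S f p - p| ^ t) ^ (1 / t)

/-- The principal's expected payoff from predictor `f` with indirect utilities `U i`. -/
def payoff (S : Setup n) (U : Fin n → ℝ → ℝ) (f : Fin n → ℝ →₀ ℝ) : ℝ :=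
  ∑ i, S.lam i * ∑ p ∈ (f i).support, f i p * U i p

/-- The principal's payoff in the event-independent setting. -/
def payoffEI (S : Setup n) (U : ℝ → ℝ) (f : Fin n → ℝ →₀ ℝ) : ℝ :=
  payoff S (fun _ => U) f

/-- A predictor is perfectly calibrated if `κ(q) = q` on its support. -/
def PerfectlyCalibrated (S : Setup n) (g : Fin n → ℝ →₀ ℝ) : Prop :=
  ∀ q ∈ suppF g, kappa S g q = q

/-- An event-independent post-processing plan: a finitely supported probability
distribution on `[0,1] × [0,1]`; the first coordinate is `q`, the second is `p`. -/
def IsPlan (χ : ℝ × ℝ →₀ ℝ) : Prop :=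
  (∀ x, 0 ≤ χ x) ∧ (∀ x ∈ χ.support, x.1 ∈ Set.Icc (0 : ℝ) 1 ∧ x.2 ∈ Set.Icc (0 : ℝ) 1) ∧
    (∑ x ∈ χ.support, χ x) = 1

/-- The `ℓ_t` calibration cost `∑ χ(q,p) |q - p|^t` of a plan. -/
def planCost (t : ℝ) (χ : ℝ × ℝ →₀ ℝ) : ℝ := ∑ x ∈ χ.support, χ x * |x.1 - x.2| ^ t

/-- The `q`-marginal `∑_p χ(q, p)` of a plan. -/
def planMargQ (χ : ℝ × ℝ →₀ ℝ) (q : ℝ) : ℝ :=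
  ∑ x ∈ χ.support.filter fun x => x.1 = q, χ x

/-- Feasibility of a post-processing plan for a perfectly calibrated predictor `g` and
an `ℓ_t` ECE budget `ε`. -/
def FeasiblePlan (S : Setup n) (t ε : ℝ) (g : Fin n → ℝ →₀ ℝ) (χ : ℝ × ℝ →₀ ℝ) : Prop :=
  planCost t χ ≤ ε ^ t ∧ ∀ q, planMargQ χ q = marginal S g q

/-- The value `f_i(p) = ∑_q (g̃_i(q)/g(q)) χ(q,p)` of the predictor generated by `(g̃, χ)`. -/
def genVal (S : Setup n) (g : Fin n → ℝ →₀ ℝ) (χ : ℝ × ℝ →₀ ℝ) (i : Fin n) (p : ℝ) : ℝ :=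
  ∑ q ∈ suppF g, g i q / marginal S g q * χ (q, p)

/-- A predictor generated by some perfectly calibrated predictor and some feasible
event-independent post-processing plan. -/
def IsGenerated (S : Setup n) (t ε : ℝ) (f : Fin n → ℝ →₀ ℝ) : Prop :=
  ∃ (g : Fin n → ℝ →₀ ℝ) (χ : ℝ × ℝ →₀ ℝ),
    IsPredictor g ∧ PerfectlyCalibrated S g ∧ IsPlan χ ∧ FeasiblePlan S t ε g χ ∧
      ∀ i p, f i p = genVal S g χ i p

/-- The CDF of a finitely supported distribution. -/
def cdf (μ : ℝ →₀ ℝ) (x : ℝ) : ℝ := ∑ q ∈ μ.support.filter fun q => q ≤ x, μ q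

/-- The CDF of the distribution placing mass `λ_i` at `θ_i`. -/
def priorCdf (S : Setup n) (x : ℝ) : ℝ :=
  ∑ i ∈ Finset.univ.filter fun i => S.theta i ≤ x, S.lam i

/-- `μ` is a mean-preserving contraction of the distribution putting mass `λ_i` on `θ_i`. -/
def MPCprior (S : Setup n) (μ : ℝ →₀ ℝ) : Prop :=
  (∀ s ∈ Set.Icc (0 : ℝ) 1,
      (∫ x in (0 : ℝ)..s, cdf μ x) ≤ ∫ x in (0 : ℝ)..s, priorCdf S x) ∧
    (∫ x in (0 : ℝ)..(1 : ℝ), cdf μ x) = ∫ x in (0 : ℝ)..(1 : ℝ), priorCdf S x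

/-- The objective `∑ χ(q,p) U(p)` of the program LP-TwoStep. -/
def LPobj (U : ℝ → ℝ) (χ : ℝ × ℝ →₀ ℝ) : ℝ := ∑ x ∈ χ.support, χ x * U x.2

/-- Feasibility for the program LP-TwoStep. -/
def LPFeasible (S : Setup n) (ε t : ℝ) (χ : ℝ × ℝ →₀ ℝ) (g : ℝ →₀ ℝ) : Prop :=
  (∀ x, 0 ≤ χ x) ∧
  (∀ x ∈ χ.support, x.1 ∈ Set.Icc (0 : ℝ) 1 ∧ x.2 ∈ Set.Icc (0 : ℝ) 1) ∧
  planCost t χ ≤ ε ^ t ∧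
  (∀ q, planMargQ χ q = g q) ∧ IsDist g ∧ MPCprior S g

/-- The optimal value of LP-TwoStep. -/
def OPTLP (S : Setup n) (ε t : ℝ) (U : ℝ → ℝ) : ℝ :=
  sSup {v | ∃ (χ : ℝ × ℝ →₀ ℝ) (g : ℝ →₀ ℝ), LPFeasible S ε t χ g ∧ v = LPobj U χ}

/-- Symmetric linear-tailed convex function with linear tails `[0, xL]`, `[xH, 1]` and
tail slopes `s1`, `s2` of equal absolute value. -/
def SymLinTailedConvex (Γ : ℝ → ℝ) (xL xH s1 s2 : ℝ) : Prop :=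
  ConvexOn ℝ (Set.Icc (0 : ℝ) 1) Γ ∧ 0 ≤ xL ∧ xL ≤ xH ∧ xH ≤ 1 ∧ |s1| = |s2| ∧
    (∃ c1, ∀ x ∈ Set.Icc (0 : ℝ) xL, Γ x = c1 + s1 * x) ∧
    (∃ c2, ∀ x ∈ Set.Icc xH (1 : ℝ), Γ x = c2 + s2 * x)

/-- Tuples `(i, j, q, p)` indexing a bi-event post-processing plan. -/
abbrev BiTuple (n : ℕ) := Fin n × Fin n × ℝ × ℝ

/-- The contribution ratio `r_{i,j}(q)`. -/
def ratio (S : Setup n) (i j : Fin n) (q : ℝ) : ℝ :=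
  if S.theta i < S.theta j then (S.theta j - q) / (S.theta j - S.theta i) else 1

/-- The contribution of the tuple `x = (i', j', q, p)` to event `i`:
`r_{i,j'}(q)` if `i' = i`, and `1 - r_{i',i}(q)` if `j' = i ≠ i'`. -/
def contrib (S : Setup n) (x : BiTuple n) (i : Fin n) : ℝ :=
  (if x.1 = i then ratio S x.1 x.2.1 x.2.2.1 else 0) +
    (if x.2.1 = i ∧ x.1 ≠ i then 1 - ratio S x.1 x.2.1 x.2.2.1 else 0)

/-- A bi-event post-processing plan. -/
def IsBiPlan (S : Setup n) (χ : BiTuple n →₀ ℝ) : Prop :=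
  (∀ x, 0 ≤ χ x) ∧
    ∀ x ∈ χ.support, x.1 ≤ x.2.1 ∧ x.2.2.1 ∈ Set.Icc (0 : ℝ) 1 ∧
      x.2.2.2 ∈ Set.Icc (0 : ℝ) 1 ∧ S.theta x.1 ≤ x.2.2.1 ∧ x.2.2.1 ≤ S.theta x.2.1

/-- Feasibility of a bi-event post-processing plan for `ℓ_t` ECE budget `ε`. -/
def FeasibleBiPlan (S : Setup n) (t ε : ℝ) (χ : BiTuple n →₀ ℝ) : Prop :=
  IsBiPlan S χ ∧
    (∑ x ∈ χ.support, χ x * |x.2.2.1 - x.2.2.2| ^ t) ≤ ε ^ t ∧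
    ∀ i, (∑ x ∈ χ.support, χ x * contrib S x i) = S.lam i

/-- The value `f_i(p)` of the predictor generated by a bi-event post-processing plan. -/
def genValBi (S : Setup n) (χ : BiTuple n →₀ ℝ) (i : Fin n) (p : ℝ) : ℝ :=
  1 / S.lam i * ∑ x ∈ χ.support.filter fun x => x.2.2.2 = p, χ x * contrib S x i

/-- The objective of LP-TwoStep+: `∑ χ_{i,j}(q,p) U_{i,j}(q,p)`. -/
def biObj (S : Setup n) (U : Fin n → ℝ → ℝ) (χ : BiTuple n →₀ ℝ) : ℝ :=
  ∑ x ∈ χ.support, χ x * (ratio S x.1 x.2.1 x.2.2.1 * U x.1 x.2.2.2 +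
    (1 - ratio S x.1 x.2.1 x.2.2.1) * U x.2.1 x.2.2.2)

/-- The optimal value of LP-TwoStep+. -/
def OPTBi (S : Setup n) (U : Fin n → ℝ → ℝ) (t ε : ℝ) : ℝ :=
  sSup {v | ∃ χ : BiTuple n →₀ ℝ, FeasibleBiPlan S t ε χ ∧ v = biObj S U χ}

/-- `U` is piecewise constant with all its discontinuity points in `Z`. -/
def PiecewiseConstWrt (Z : Finset ℝ) (U : ℝ → ℝ) : Prop :=
  ∀ x ∈ Set.Icc (0 : ℝ) 1, ∀ y ∈ Set.Icc (0 : ℝ) 1,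
    (∀ z ∈ Z, z ∉ Set.uIcc x y) → U x = U y

/-- The bound `S = ⌈2 ln(1/δ) / ln(1+δ)⌉` of the second discretization layer. -/
def Sbound (δ : ℝ) : ℕ := ⌈2 * Real.log (1 / δ) / Real.log (1 + δ)⌉₊

/-- The instance-dependent two-layer discretized set `S_δ`. -/
def gridSet (S : Setup n) (Z : Finset ℝ) (ε t δ : ℝ) : Set ℝ :=
  ({x : ℝ | ∃ k : ℕ, x = (k : ℝ) * δ} ∪ {(1 : ℝ)} ∪ Set.range S.theta ∪ (↑Z : Set ℝ) ∪
      {x : ℝ | ∃ z ∈ (↑Z : Set ℝ) ∪ Set.range S.theta, ∃ s : ℕ, s ≤ Sbound δ ∧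
        (x = z + (ε ^ t * δ * (1 + δ) ^ s) ^ (1 / t) ∨
          x = z - (ε ^ t * δ * (1 + δ) ^ s) ^ (1 / t))}) ∩
    Set.Icc (0 : ℝ) 1

/-- Feasibility for the discretized program LP-DiscTwoStep+. -/
def DiscFeasibleBiPlan (S : Setup n) (Z : Finset ℝ) (t ε δ : ℝ) (χ : BiTuple n →₀ ℝ) : Prop :=
  FeasibleBiPlan S t ε χ ∧
    ∀ x ∈ χ.support, x.2.2.1 ∈ gridSet S Z ε t δ ∧ x.2.2.2 ∈ gridSet S Z ε t δ

/-- The optimal value of LP-DiscTwoStep+. -/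
def OPTBiDisc (S : Setup n) (U : Fin n → ℝ → ℝ) (Z : Finset ℝ) (t ε δ : ℝ) : ℝ :=
  sSup {v | ∃ χ : BiTuple n →₀ ℝ, DiscFeasibleBiPlan S Z t ε δ χ ∧ v = biObj S U χ}

/-- A Bayesian persuasion instance with signal-dependent bias: states `θ_i` with
prior `λ`, actions `A`, sender utility `u a i = u(a, θ_i) ≥ 0`, and receiver utility
determined by `v1 a = v(a,1)` and `v0 a = v(a,0)`. -/
structure PSetup (n : ℕ) (A : Type*) : Type _ where
  lam : Fin n → ℝ
  theta : Fin n → ℝ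
  u : A → Fin n → ℝ
  v1 : A → ℝ
  v0 : A → ℝ
  lam_pos : ∀ i, 0 < lam i
  lam_sum : ∑ i, lam i = 1
  theta_mem : ∀ i, theta i ∈ Set.Icc (0 : ℝ) 1
  u_nonneg : ∀ a i, 0 ≤ u a i

variable {A σT : Type*}

/-- The receiver's utility from action `a` at belief mean `x`. -/
def rcvU (P : PSetup n A) (a : A) (x : ℝ) : ℝ := x * P.v1 a + (1 - x) * P.v0 a

/-- The total probability `m(σ)` of a signal `σ`. -/
def mass [Fintype σT] (P : PSetup n A) (π : Fin n → σT → ℝ) (σ : σT) : ℝ :=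
  ∑ i, P.lam i * π i σ

/-- The biased posterior mean `p(σ)` of the receiver upon signal `σ`. -/
def belief [Fintype σT] (P : PSetup n A) (π : Fin n → σT → ℝ) (b : σT → ℝ) (σ : σT) : ℝ :=
  (b σ + ∑ i, P.lam i * π i σ * P.theta i) / mass P π σ

/-- Validity of a sender strategy `(π, b)`. -/
def ValidStrategy [Fintype σT] (P : PSetup n A) (π : Fin n → σT → ℝ) (b : σT → ℝ) : Prop :=
  (∀ i σ, 0 ≤ π i σ) ∧ (∀ i, ∑ σ, π i σ = 1) ∧
    ∀ σ, 0 < mass P π σ → belief P π b σ ∈ Set.Icc (0 : ℝ) 1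

/-- `astar` is a receiver best-response selection for the strategy `(π, b)`. -/
def BestResponse [Fintype σT] (P : PSetup n A) (π : Fin n → σT → ℝ) (b : σT → ℝ)
    (astar : σT → A) : Prop :=
  ∀ σ, 0 < mass P π σ → ∀ a, rcvU P a (belief P π b σ) ≤ rcvU P (astar σ) (belief P π b σ)

/-- The bounded-rationality constraint on the total bias. -/
def BRconstraint [Fintype σT] (P : PSetup n A) (t ε : ℝ) (π : Fin n → σT → ℝ)
    (b : σT → ℝ) : Prop :=
  (∑ σ, mass P π σ * |b σ / mass P π σ| ^ t) ^ (1 / t) ≤ ε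

/-- The sender's expected payoff from strategy `π` with receiver selection `astar`. -/
def senderPayoff [Fintype σT] (P : PSetup n A) (π : Fin n → σT → ℝ) (astar : σT → A) : ℝ :=
  ∑ i, P.lam i * ∑ σ, π i σ * P.u (astar σ) i

/-- Feasibility for the action-recommendation program P-ActRec. -/
def PActRecFeasible [Fintype A] (P : PSetup n A) (t ε : ℝ)
    (π : Fin n → A → ℝ) (b : A → ℝ) : Prop :=
  (∀ i a, 0 ≤ π i a) ∧ (∀ i, ∑ a, π i a = 1) ∧
  (∀ a, mass P π a = 0 → b a = 0) ∧
  (∑ a, mass P π a * |b a / mass P π a| ^ t) ≤ ε ^ t ∧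
  (∀ a, 0 ≤ b a + ∑ i, P.lam i * π i a * P.theta i) ∧
  (∀ a, b a + ∑ i, P.lam i * π i a * P.theta i ≤ mass P π a) ∧
  ∀ a a' : A,
    (b a + ∑ i, P.lam i * π i a * P.theta i) * P.v1 a' +
        (mass P π a - (b a + ∑ i, P.lam i * π i a * P.theta i)) * P.v0 a' ≤
      (b a + ∑ i, P.lam i * π i a * P.theta i) * P.v1 a +
        (mass P π a - (b a + ∑ i, P.lam i * π i a * P.theta i)) * P.v0 a

/-- The sender-side marginal probability of recommendation `a` (calibration model). -/
def pmass [Fintype A] (S : Setup n) (π : Fin n → A → ℝ) (a : A) : ℝ := ∑ i, S.lam i * π i a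

/-- The biased posterior mean associated with recommendation `a` (calibration model). -/
def pbelief [Fintype A] (S : Setup n) (π : Fin n → A → ℝ) (b : A → ℝ) (a : A) : ℝ :=
  (b a + ∑ i, S.lam i * π i a * S.theta i) / pmass S π a

/-!
Let `p a` be the biased posterior mean of the recommendation `a`. The predictor `f_i` is the
pushforward of `π_i` along `p`, so expectations under `f` are expectations under `π` of functions
composed with `p`. Applied to the indirect utilities this computes the payoff, since the action
taken at `p a` is `a`. Following recommendations also makes `p` injective on the recommendations
that are sent, so the prediction `p a` reveals `a`: its true expected outcome is the unbiased
posterior mean, which misses `p a` by exactly `b a / m a`. Hence the calibration error equals the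
bounded-rationality cost.
-/

lemma payoffEI_eq_sum_marginal (S : Setup n) (g : ℝ → ℝ) (f : Fin n → ℝ →₀ ℝ) :
    payoffEI S g f = ∑ q ∈ suppF f, marginal S f q * g q := by
  have sum_suppF (i : Fin n) :
      ∑ q ∈ (f i).support, f i q * g q = ∑ q ∈ suppF f, f i q * g q :=
    Finsupp.sum_of_support_subset (f i)
      (subset_biUnion_of_mem (fun j => (f j).support) (mem_univ i))
      (fun q x => x * g q) fun q _ => zero_mul (g q)
  simp only [payoffEI, payoff, marginal, sum_suppF, mul_sum, sum_mul, mul_assoc]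
  exact sum_comm

/-- The predictor that draws a recommendation `a` from `π i` in event `i` and predicts `p a`:
each `f_i` is the pushforward of `π i` along `p`. -/
def inducedPredictor [Fintype A] (π : Fin n → A → ℝ) (p : A → ℝ) : Fin n → ℝ →₀ ℝ :=
  fun i => (Finsupp.equivFunOnFinite.symm (π i)).mapDomain p

section InducedPredictor

variable [Fintype A] (S : Setup n) (π : Fin n → A → ℝ) (p : A → ℝ)

lemma inducedPredictor_apply (i : Fin n) (q : ℝ) :
    inducedPredictor π p i q = ∑ a with p a = q, π i a := by
  simp only [inducedPredictor, Finsupp.mapDomain, Finsupp.sum_apply, Finsupp.single_apply,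
    sum_filter]
  exact Finsupp.sum_fintype _ _ fun a => ite_self 0

lemma sum_inducedPredictor_mul (i : Fin n) (g : ℝ → ℝ) :
    ∑ q ∈ (inducedPredictor π p i).support, inducedPredictor π p i q * g q =
      ∑ a, π i a * g (p a) := by
  calc (inducedPredictor π p i).sum (fun q x => x * g q)
      = (Finsupp.equivFunOnFinite.symm (π i)).sum fun a x => x * g (p a) :=
        Finsupp.sum_mapDomain_index (fun q => zero_mul (g q)) fun q x y => add_mul x y (g q)
    _ = ∑ a, π i a * g (p a) := Finsupp.sum_fintype _ _ fun a => zero_mul (g (p a))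

lemma payoff_inducedPredictor (U : Fin n → ℝ → ℝ) :
    payoff S U (inducedPredictor π p) = ∑ i, S.lam i * ∑ a, π i a * U i (p a) := by
  simp only [payoff, sum_inducedPredictor_mul]

lemma payoffEI_inducedPredictor (g : ℝ → ℝ) :
    payoffEI S g (inducedPredictor π p) = ∑ a, pmass S π a * g (p a) := by
  simp only [payoffEI, payoff_inducedPredictor, pmass, mul_sum, sum_mul, mul_assoc]
  exact sum_comm

end InducedPredictor

section Recommendations

variable [Fintype A] {S : Setup n} {π : Fin n → A → ℝ} {p : A → ℝ}

lemma pmass_nonneg (hπ : ∀ i a, 0 ≤ π i a) (a : A) : 0 ≤ pmass S π a :=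
  sum_nonneg fun i _ => mul_nonneg (S.lam_pos i).le (hπ i a)

lemma pmass_pos_of_ne_zero (hπ : ∀ i a, 0 ≤ π i a) {i : Fin n} {a : A} (h : π i a ≠ 0) :
    0 < pmass S π a :=
  sum_pos' (fun j _ => mul_nonneg (S.lam_pos j).le (hπ j a))
    ⟨i, mem_univ i, mul_pos (S.lam_pos i) ((hπ i a).lt_of_ne' h)⟩

lemma isPredictor_inducedPredictor (hπ : ∀ i a, 0 ≤ π i a) (hπ_sum : ∀ i, ∑ a, π i a = 1)
    (hp : ∀ a, 0 < pmass S π a → p a ∈ Set.Icc (0 : ℝ) 1) :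
    IsPredictor (inducedPredictor π p) := by
  refine fun i => ⟨fun q => ?_, fun q hq => ?_, ?_⟩
  · rw [inducedPredictor_apply]
    exact sum_nonneg fun a _ => hπ i a
  · rw [Finsupp.mem_support_iff, inducedPredictor_apply] at hq
    obtain ⟨a, ha, hne⟩ := exists_ne_zero_of_sum_ne_zero hq
    exact (mem_filter.1 ha).2 ▸ hp a (pmass_pos_of_ne_zero hπ hne)
  · simpa only [mul_one, hπ_sum] using sum_inducedPredictor_mul π p i fun _ => 1

lemma inducedPredictor_apply_of_injOn (hπ : ∀ i a, 0 ≤ π i a)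
    (hp : Set.InjOn p {a | 0 < pmass S π a}) {a : A} (ha : 0 < pmass S π a) (i : Fin n) :
    inducedPredictor π p i (p a) = π i a :=
  Finsupp.mapDomain_apply' {a | 0 < pmass S π a} _
    (fun _ h => pmass_pos_of_ne_zero hπ (Finsupp.mem_support_iff.1 h)) hp ha

lemma kappa_inducedPredictor (hπ : ∀ i a, 0 ≤ π i a)
    (hp : Set.InjOn p {a | 0 < pmass S π a}) {a : A} (ha : 0 < pmass S π a) :
    kappa S (inducedPredictor π p) (p a) =
      (∑ i, S.lam i * π i a * S.theta i) / pmass S π a := by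
  simp only [kappa, marginal, pmass, inducedPredictor_apply_of_injOn hπ hp ha]

lemma kappa_sub_pbelief {b : A → ℝ} (hπ : ∀ i a, 0 ≤ π i a)
    (hp : Set.InjOn (pbelief S π b) {a | 0 < pmass S π a}) {a : A} (ha : 0 < pmass S π a) :
    kappa S (inducedPredictor π (pbelief S π b)) (pbelief S π b a) - pbelief S π b a =
      -(b a / pmass S π a) := by
  rw [kappa_inducedPredictor hπ hp ha, pbelief]
  ring

lemma ECE_inducedPredictor_pbelief {b : A → ℝ} (hπ : ∀ i a, 0 ≤ π i a)
    (hp : Set.InjOn (pbelief S π b) {a | 0 < pmass S π a}) (t : ℝ) :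
    ECE S t (inducedPredictor π (pbelief S π b)) =
      (∑ a, pmass S π a * |b a / pmass S π a| ^ t) ^ (1 / t) := by
  -- The error is the payoff of a principal whose utility at the prediction `q` is `|κ(q) - q| ^ t`.
  rw [ECE, ← payoffEI_eq_sum_marginal S
    (fun q => |kappa S (inducedPredictor π (pbelief S π b)) q - q| ^ t), payoffEI_inducedPredictor]
  congr 1
  refine sum_congr rfl fun a _ => ?_
  obtain ha | ha := (pmass_nonneg (S := S) hπ a).eq_or_lt
  · simp only [← ha, zero_mul]
  · rw [kappa_sub_pbelief hπ hp ha, abs_neg]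

lemma payoff_inducedPredictor_of_leftInvOn {response : ℝ → A} (hπ : ∀ i a, 0 ≤ π i a)
    (hfollow : Set.LeftInvOn response p {a | 0 < pmass S π a}) (u : Fin n → A → ℝ) :
    payoff S (fun i q => u i (response q)) (inducedPredictor π p) =
      ∑ i, S.lam i * ∑ a, π i a * u i a := by
  rw [payoff_inducedPredictor]
  congr! 3 with i _ a _
  by_cases h : π i a = 0
  · simp only [h, zero_mul]
  · rw [hfollow (pmass_pos_of_ne_zero hπ h)]

end Recommendations

theorem statement19_general [Fintype A] (S : Setup n) (u : Fin n → A → ℝ) (response : ℝ → A)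
    (t : ℝ) (π : Fin n → A → ℝ) (b : A → ℝ)
    (hπ : ∀ i a, 0 ≤ π i a) (hπ_sum : ∀ i, ∑ a, π i a = 1)
    (hbel : ∀ a, 0 < pmass S π a → pbelief S π b a ∈ Set.Icc (0 : ℝ) 1)
    (hfollow : ∀ a, 0 < pmass S π a → response (pbelief S π b a) = a) :
    ∃ f : Fin n → ℝ →₀ ℝ,
      (∀ i p, f i p = ∑ a with pbelief S π b a = p, π i a) ∧
      IsPredictor f ∧
      ECE S t f = (∑ a, pmass S π a * |b a / pmass S π a| ^ t) ^ (1 / t) ∧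
      payoff S (fun i p => u i (response p)) f = ∑ i, S.lam i * ∑ a, π i a * u i a := by
  have response_leftInv : Set.LeftInvOn response (pbelief S π b) {a | 0 < pmass S π a} := hfollow
  exact ⟨inducedPredictor π (pbelief S π b), inducedPredictor_apply π _,
    isPredictor_inducedPredictor hπ hπ_sum hbel,
    ECE_inducedPredictor_pbelief hπ response_leftInv.injOn t,
    payoff_inducedPredictor_of_leftInvOn hπ response_leftInv u⟩

/-- Instance equivalence, from persuasion strategy to predictor:
a direct sender strategy `(π, b)` with pairwise distinct biased posterior means,
followed recommendations, and bounded-rationality budget `(ε, t)` induces the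
predictor `f_i(p) = ∑_a π_i(a) 1{p(a) = p}`, which is a finitely supported
`(ε, ℓ_t)`-calibrated predictor whose principal payoff equals the sender's payoff. -/
theorem statement19 {n : ℕ} {A : Type*} [Fintype A] (S : Setup n)
    (u0 u1 : Fin n → A → ℝ) (v0 v1 : A → ℝ)
    (hu : ∀ i a, 0 ≤ u0 i a ∧ 0 ≤ u1 i a)
    (astar : ℝ → A)
    (hastar : ∀ p ∈ Set.Icc (0 : ℝ) 1, ∀ a : A,
      p * v1 a + (1 - p) * v0 a ≤ p * v1 (astar p) + (1 - p) * v0 (astar p))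
    (t ε : ℝ) (ht : 1 ≤ t) (hε : 0 ≤ ε)
    (π : Fin n → A → ℝ) (b : A → ℝ)
    (hπ0 : ∀ i a, 0 ≤ π i a) (hπ1 : ∀ i, ∑ a, π i a = 1)
    (hbel : ∀ a, 0 < pmass S π a → pbelief S π b a ∈ Set.Icc (0 : ℝ) 1)
    (hdist : ∀ a a' : A, 0 < pmass S π a → 0 < pmass S π a' → a ≠ a' →
      pbelief S π b a ≠ pbelief S π b a')
    (hfollow : ∀ a, 0 < pmass S π a → astar (pbelief S π b a) = a)
    (hBR : (∑ a, pmass S π a * |b a / pmass S π a| ^ t) ^ (1 / t) ≤ ε) :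
    ∃ f : Fin n → ℝ →₀ ℝ,
      (∀ i p, f i p = ∑ a ∈ Finset.univ.filter fun a => pbelief S π b a = p, π i a) ∧
      IsPredictor f ∧ ECE S t f ≤ ε ∧
      (∑ i, S.lam i * ∑ p ∈ (f i).support,
          f i p * (S.theta i * u1 i (astar p) + (1 - S.theta i) * u0 i (astar p))) =
        ∑ i, S.lam i * ∑ a, π i a * ((1 - S.theta i) * u0 i a + S.theta i * u1 i a) := by
  obtain ⟨f, hf, hpred, hECE, hpayoff⟩ := statement19_general S
    (fun i a => (1 - S.theta i) * u0 i a + S.theta i * u1 i a) astar t π b hπ0 hπ1 hbel hfollow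
  exact ⟨f, hf, hpred, hECE.trans_le hBR, by simpa only [payoff, add_comm] using hpayoff⟩

end PersuasiveCalibration
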